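/- Let X ⊆ ℝ^n be a compact basic semi-algebraic set defined by polynomial inequalities g_j(x) ≥ 0 (j ∈ [m]) and polynomial equalities h_i(x) = 0 (i ∈ [p]), and suppose X ⊆ B_R, the closed ball of radius R. Define the semi-algebraic distance function d_X(x) = dist(x, X) and f(x) = max{max_j max(0, -g_j(x)), max_i |h_i(x)|} on B_R. Then there exist constants c > 0 and Ł > 0 such that d_X(x) ≤ c·f(x)^Ł for all x ∈ B_R. -/

import Mathlib

section
open Polynomial

namespace Loj
variable {H : Type*} [Field H] [LinearOrder H] [IsStrictOrderedRing H]

def Small (d y : H) : Prop := ∀ N : ℕ, |y| ≤ d ^ N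

theorem Small.add {d : H} (h0 : 0 < d) (h2 : 2 * d ≤ 1) {y z : H} (hy : Small d y)
    (hz : Small d z) : Small d (y + z) := by
  intro N
  have h1 := hy (N+1)
  have h3 := hz (N+1)
  have h4 := abs_add_le y z
  have h5 : 0 < d ^ N := by positivity
  rw [pow_succ] at h1 h3
  nlinarith

theorem Small.neg {d : H} {y : H} (hy : Small d y) : Small d (-y) := by
  intro N
  rw [abs_neg]; exact hy N

theorem Small.of_le {d : H} {y z : H} (hy : Small d y) (h : |z| ≤ |y|) : Small d z :=
  fun N => h.trans (hy N)

def modR (d : H) (h0 : 0 < d) (h2 : 2 * d ≤ 1) : Subring H where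
  carrier := {y | ∃ N : ℕ, |y| * d ^ N ≤ 1}
  mul_mem' := by
    rintro a b ⟨N, hN⟩ ⟨M, hM⟩
    refine ⟨N + M, ?_⟩
    rw [abs_mul, pow_add]
    calc |a| * |b| * (d ^ N * d ^ M) = (|a| * d ^ N) * (|b| * d ^ M) := by ring
      _ ≤ 1 := mul_le_one₀ hN (by positivity) hM
  one_mem' := ⟨0, by simp⟩
  zero_mem' := ⟨0, by simp⟩
  neg_mem' := by
    rintro a ⟨N, hN⟩
    exact ⟨N, by rwa [abs_neg]⟩
  add_mem' := by
    rintro a b ⟨N, hN⟩ ⟨M, hM⟩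
    refine ⟨N + M + 1, ?_⟩
    have hd1 : d ≤ 1 := by linarith
    have hNp : d ^ N ≤ 1 := pow_le_one₀ h0.le hd1
    have hMp : d ^ M ≤ 1 := pow_le_one₀ h0.le hd1
    have e1 : |a| * d ^ N * d ^ M ≤ 1 := mul_le_one₀ hN (by positivity) hMp
    have e2 : |b| * d ^ M * d ^ N ≤ 1 := mul_le_one₀ hM (by positivity) hNp
    have h4 := abs_add_le a b
    have h5 : 0 < d ^ N * d ^ M := by positivity
    calc |a + b| * d ^ (N + M + 1) = |a + b| * (d ^ N * d ^ M) * d := by ring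
      _ ≤ (|a| + |b|) * (d ^ N * d ^ M) * d := by gcongr
      _ = (|a| * d ^ N * d ^ M + |b| * d ^ M * d ^ N) * d := by ring
      _ ≤ 2 * d := by gcongr; linarith
      _ ≤ 1 := h2

variable {d : H} {h0 : 0 < d} {h2 : 2 * d ≤ 1}

theorem Small.mul {y z : H} (hz : z ∈ modR d h0 h2) (hy : Small d y) : Small d (z * y) := by
  obtain ⟨N, hN⟩ := hz
  intro M
  have h1 := hy (N + M)
  rw [abs_mul]
  calc |z| * |y| ≤ |z| * d ^ (N + M) := by gcongr
    _ = (|z| * d ^ N) * d ^ M := by ring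
    _ ≤ 1 * d ^ M := by gcongr
    _ = d ^ M := one_mul _

theorem Small.mem {y : H} (hy : Small d y) : y ∈ modR d h0 h2 :=
  ⟨0, by simpa using hy 0⟩

theorem inv_mem_of_not_small {y : H} (hy : ¬ Small d y) : y⁻¹ ∈ modR d h0 h2 := by
  unfold Small at hy
  push Not at hy
  obtain ⟨N, hN⟩ := hy
  refine ⟨N, ?_⟩
  have : 0 < |y| := lt_of_le_of_lt (by positivity) hN
  rw [abs_inv, inv_mul_le_iff₀ this]
  linarith

theorem not_small_of_inv_mem {y : H} (hy : y ≠ 0) (hi : y⁻¹ ∈ modR d h0 h2) : ¬ Small d y := by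
  intro h
  obtain ⟨N, hN⟩ := hi
  have hp : 0 < |y| := abs_pos.mpr hy
  rw [abs_inv, inv_mul_le_iff₀ hp] at hN
  have := h (N+1)
  have h5 : 0 < d ^ N := by positivity
  rw [pow_succ] at this
  nlinarith

theorem hensel (ivt : ∀ (P : H[X]) (x y : H), P.eval x * P.eval y ≤ 0 →
      ∃ z ∈ Set.uIcc x y, P.eval z = 0)
    (P : (modR d h0 h2)[X]) (a : modR d h0 h2) (hP : Small d ((P.eval a : modR d h0 h2) : H))
    (hP' : ¬ Small d ((P.derivative.eval a : modR d h0 h2) : H)) :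
    ∃ b : modR d h0 h2, P.eval b = 0 ∧ Small d ((b : H) - a) := by
  let K := modR d h0 h2
  set e : K := P.eval a with he
  set u : K := P.derivative.eval a with hu
  have hu0 : (u : H) ≠ 0 := by
    intro h; apply hP'; rw [h]; intro N; simp; positivity
  let w : K := ⟨(u : H)⁻¹, inv_mem_of_not_small hP'⟩
  have huw : u * w = 1 := Subtype.ext (by simp [w, hu0])
  let δ : K := 2 * w * e
  have hδ : Small d (δ : H) := by
    have : (δ : H) = ((2 * w : K) : H) * e := rfl
    rw [this]; exact Small.mul (2 * w : K).2 hP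
  obtain ⟨k, hk⟩ := P.binomExpansion a δ
  obtain ⟨l, hl⟩ := P.binomExpansion a (-δ)
  rw [← he, ← hu] at hk hl
  have small_half : ∀ k : K, |((k * (2 * w) * δ : K) : H)| ≤ 1 / 2 := by
    intro k
    have : Small d ((k * (2 * w) * δ : K) : H) := Small.mul (k * (2 * w) : K).2 hδ
    have := this 1
    linarith [pow_one d]
  have ek : P.eval (a + δ) = e * (3 + k * (2 * w) * δ) := by
    rw [hk]; simp only [δ]
    linear_combination (2 * e) * huw
  have el : P.eval (a + -δ) = e * (-1 + l * (2 * w) * δ) := by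
    rw [hl]; simp only [δ]
    linear_combination (-2 * e) * huw
  have evalc : ∀ x : K, (P.map K.subtype).eval (x : H) = ((P.eval x : K) : H) := by
    intro x
    exact Polynomial.eval_map_apply (f := K.subtype) x
  have key : (P.map K.subtype).eval ((a + δ : K) : H) *
      (P.map K.subtype).eval ((a + -δ : K) : H) ≤ 0 := by
    rw [evalc, evalc, ek, el]
    have h1 := abs_le.mp (small_half k)
    have h3 := abs_le.mp (small_half l)
    rw [Subring.coe_mul, Subring.coe_mul, Subring.coe_add, Subring.coe_add]
    set s := ((k * (2 * w) * δ : K) : H)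
    set t := ((l * (2 * w) * δ : K) : H)
    have c3 : ((3 : K) : H) = 3 := rfl
    have c1 : ((-1 : K) : H) = -1 := rfl
    rw [c3, c1]
    have : (e : H) * (3 + s) * (e * (-1 + t)) = -((e : H)^2 * ((3 + s) * (1 - t))) := by ring
    rw [this]
    have h4 : 0 ≤ 3 + s := by linarith
    have h5 : 0 ≤ 1 - t := by linarith
    have : 0 ≤ (e : H)^2 * ((3 + s) * (1 - t)) := by positivity
    linarith
  obtain ⟨z, hz, hz0⟩ := ivt _ _ _ key
  have hza : |z - a| ≤ |(δ : H)| := by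
    rw [Set.mem_uIcc] at hz
    push_cast at hz
    rcases hz with ⟨h, h'⟩ | ⟨h, h'⟩
    · rw [abs_le]; constructor <;> cases abs_cases (δ : H) <;> linarith
    · rw [abs_le]; constructor <;> cases abs_cases (δ : H) <;> linarith
  have hs : Small d (z - a) := hδ.of_le hza
  have hzK : z ∈ K := by
    have := K.add_mem (Small.mem (h0 := h0) (h2 := h2) hs) a.2
    simpa using this
  refine ⟨⟨z, hzK⟩, ?_, hs⟩
  have := evalc ⟨z, hzK⟩
  rw [hz0] at this
  exact Subtype.ext this.symm

open IntermediateField in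
theorem exists_lift (ivt : ∀ (P : H[X]) (x y : H), P.eval x * P.eval y ≤ 0 →
      ∃ z ∈ Set.uIcc x y, P.eval z = 0) (F0 : Subfield H)
    (hF0 : ∀ y ∈ F0, y ∈ modR d h0 h2) :
    ∃ F : Subfield H, F0 ≤ F ∧ (∀ y ∈ F, y ∈ modR d h0 h2) ∧
      ∀ a ∈ modR d h0 h2, ∃ b ∈ F, Small d (b - a) := by
  obtain ⟨F, hF0F, hF⟩ := zorn_le_nonempty₀ {F : Subfield H | ∀ y ∈ F, y ∈ modR d h0 h2} (by
    intro c hc hch y hy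
    refine ⟨sSup c, ?_, fun z hz => le_sSup hz⟩
    intro x hx
    rw [Subfield.mem_sSup_of_directedOn ⟨y, hy⟩ hch.directedOn] at hx
    obtain ⟨s, hs, hxs⟩ := hx
    exact hc hs x hxs) F0 hF0
  have hFK : ∀ y ∈ F, y ∈ modR d h0 h2 := hF.1
  refine ⟨F, hF0F, hFK, ?_⟩
  -- maximality
  have hmax : ∀ b : H, (∀ y ∈ F⟮b⟯, y ∈ modR d h0 h2) → b ∈ F := by
    intro b hb
    have hle : F ≤ F⟮b⟯.toSubfield := fun x hx => F⟮b⟯.algebraMap_mem ⟨x, hx⟩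
    exact hF.2 (y := F⟮b⟯.toSubfield) hb hle (mem_adjoin_simple_self F b)
  set K := modR d h0 h2 with hK
  let j : F →+* K := F.subtype.codRestrict K (fun x => hFK x x.2)
  have hj : ∀ (P : F[X]) (b : K), (((P.map j).eval b : K) : H) = aeval (b : H) P := by
    intro P b
    rw [eval_map]
    change K.subtype (eval₂ j b P) = _
    rw [hom_eval₂]
    rfl
  intro a ha
  by_cases hall : ∀ P : F[X], P ≠ 0 → ¬ Small d (aeval a P)
  · refine ⟨a, hmax a ?_, by intro N; simp; positivity⟩
    intro y hy
    rw [mem_adjoin_simple_iff] at hy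
    obtain ⟨r, s, rfl⟩ := hy
    rw [div_eq_mul_inv]
    have h1 : aeval a r ∈ K := by rw [← hj r ⟨a, ha⟩]; exact Subtype.property _
    by_cases hs : s = 0
    · simp [hs]
    · exact K.mul_mem h1 (inv_mem_of_not_small (hall s hs))
  · push Not at hall
    have hex : ∃ n : ℕ, ∃ P : F[X], P.natDegree = n ∧ P ≠ 0 ∧ Small d (aeval a P) := by
      obtain ⟨P, h⟩ := hall
      exact ⟨_, P, rfl, h⟩
    classical
    obtain ⟨P, hPn, hP0, hPs⟩ := Nat.find_spec hex
    have hmin : ∀ Q : F[X], Q.natDegree < P.natDegree → Q ≠ 0 → ¬ Small d (aeval a Q) := by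
      intro Q hQ hQ0 hQs
      rw [hPn] at hQ
      exact Nat.find_min hex hQ ⟨Q, rfl, hQ0, hQs⟩
    have hdeg : P.natDegree ≠ 0 := by
      intro h
      obtain ⟨c, rfl⟩ := natDegree_eq_zero.mp h
      have hc : c ≠ 0 := by rintro rfl; simp at hP0
      rw [aeval_C] at hPs
      refine not_small_of_inv_mem (h0 := h0) (h2 := h2) ?_ ?_ hPs
      · simpa using hc
      · exact hFK _ (F.inv_mem c.2)
    have hder0 : P.derivative ≠ 0 := by
      intro h
      exact hdeg (derivative_eq_zero.mp h)
    have hder := hmin _ (natDegree_derivative_lt hdeg) hder0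
    obtain ⟨b, hb0, hbs⟩ := hensel ivt (P.map j) ⟨a, ha⟩ (by rw [hj]; exact hPs)
      (by rw [derivative_map, hj]; exact hder)
    have hbz : aeval (b : H) P = 0 := by rw [← hj, hb0]; rfl
    refine ⟨b, hmax b ?_, hbs⟩
    intro y hy
    have halg : IsAlgebraic F (b : H) := ⟨P, hP0, hbz⟩
    have : y ∈ F⟮(b:H)⟯.toSubalgebra := hy
    rw [adjoin_simple_toSubalgebra_of_isAlgebraic halg,
      Algebra.adjoin_singleton_eq_range_aeval] at this
    obtain ⟨r, rfl⟩ := this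
    change aeval (b : H) r ∈ K
    rw [← hj r b]; exact Subtype.property _



theorem diff_small {σ : Type*} (c : ℝ →+* H) (hc : ∀ r, c r ∈ modR d h0 h2) (a b : σ → H)
    (ha : ∀ k, a k ∈ modR d h0 h2) (hb : ∀ k, b k ∈ modR d h0 h2)
    (hab : ∀ k, Small d (b k - a k)) (g : MvPolynomial σ ℝ) :
    MvPolynomial.eval₂ c a g ∈ modR d h0 h2 ∧
      Small d (MvPolynomial.eval₂ c b g - MvPolynomial.eval₂ c a g) := by
  induction g using MvPolynomial.induction_on with
  | C r => 
    simp only [MvPolynomial.eval₂_C, sub_self]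
    exact ⟨hc r, by intro N; simp; positivity⟩
  | add p q hp hq =>
    simp only [MvPolynomial.eval₂_add]
    refine ⟨Subring.add_mem _ hp.1 hq.1, ?_⟩
    have := Small.add h0 h2 hp.2 hq.2
    convert this using 1; ring
  | mul_X p k hp =>
    simp only [MvPolynomial.eval₂_mul, MvPolynomial.eval₂_X]
    refine ⟨Subring.mul_mem _ hp.1 (ha k), ?_⟩
    have := Small.add h0 h2 (Small.mul (hb k) hp.2) (Small.mul hp.1 (hab k))
    convert this using 1; ring

open Hyperreal Filter

theorem exists_seq (P : Hyperreal[X]) :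
    ∃ Q : ℕ → ℝ[X], ∀ x, P.eval (ofSeq x) = ofSeq (fun i => (Q i).eval (x i)) := by
  induction P using Polynomial.induction_on' with
  | add p q hp hq =>
    obtain ⟨P, hP⟩ := hp
    obtain ⟨Q, hQ⟩ := hq
    refine ⟨fun i => P i + Q i, fun x => ?_⟩
    simp only [eval_add, hP, hQ]
    rfl
  | monomial n a =>
    obtain ⟨a, rfl⟩ := ofSeq_surjective a
    refine ⟨fun i => monomial n (a i), fun x => ?_⟩
    simp only [eval_monomial]
    rfl

theorem hyper_ivt (P : Hyperreal[X]) (x y : Hyperreal) (h : P.eval x * P.eval y ≤ 0) :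
    ∃ z ∈ Set.uIcc x y, P.eval z = 0 := by
  obtain ⟨Q, hQ⟩ := exists_seq P
  obtain ⟨x, rfl⟩ := ofSeq_surjective x
  obtain ⟨y, rfl⟩ := ofSeq_surjective y
  rw [hQ, hQ] at h
  have h' : ∀ᶠ i in (hyperfilter ℕ : Filter ℕ), (Q i).eval (x i) * (Q i).eval (y i) ≤ 0 :=
    ofSeq_le_ofSeq.mp h
  have h3 : ∀ i, ∃ z, (Q i).eval (x i) * (Q i).eval (y i) ≤ 0 →
      (min (x i) (y i) ≤ z ∧ z ≤ max (x i) (y i)) ∧ (Q i).eval z = 0 := by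
    intro i
    by_cases hi : (Q i).eval (x i) * (Q i).eval (y i) ≤ 0
    · have := intermediate_value_uIcc (a := x i) (b := y i) (f := fun t => (Q i).eval t)
        (Q i).continuous.continuousOn
      have h0 : (0 : ℝ) ∈ Set.uIcc ((Q i).eval (x i)) ((Q i).eval (y i)) := by
        rw [Set.mem_uIcc]
        rcases mul_nonpos_iff.mp hi with h | h
        · right; exact ⟨h.2, h.1⟩
        · left; exact h
      obtain ⟨z, hz, hz0⟩ := this h0
      exact ⟨z, fun _ => ⟨hz, hz0⟩⟩
    · exact ⟨0, fun h => absurd h hi⟩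
  choose z hz using h3
  refine ⟨ofSeq z, ?_, ?_⟩
  · rcases le_total (ofSeq x) (ofSeq y) with hxy | hxy
    · rw [Set.uIcc_of_le hxy]
      have hxy' := ofSeq_le_ofSeq.mp hxy
      constructor
      · rw [ofSeq_le_ofSeq]
        filter_upwards [h', hxy'] with i hi hi'
        have := (hz i hi).1.1
        rwa [min_eq_left hi'] at this
      · rw [ofSeq_le_ofSeq]
        filter_upwards [h', hxy'] with i hi hi'
        have := (hz i hi).1.2
        rwa [max_eq_right hi'] at this
    · rw [Set.uIcc_of_ge hxy]
      have hxy' := ofSeq_le_ofSeq.mp hxy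
      constructor
      · rw [ofSeq_le_ofSeq]
        filter_upwards [h', hxy'] with i hi hi'
        have := (hz i hi).1.1
        rwa [min_eq_right hi'] at this
      · rw [ofSeq_le_ofSeq]
        filter_upwards [h', hxy'] with i hi hi'
        have := (hz i hi).1.2
        rwa [max_eq_left hi'] at this
  · rw [hQ]
    apply le_antisymm
    · refine (ofSeq_le_ofSeq (g := fun _ => 0)).mpr ?_
      filter_upwards [h'] with i hi using (hz i hi).2.le
    · refine (ofSeq_le_ofSeq (f := fun _ => 0)).mpr ?_
      filter_upwards [h'] with i hi using (hz i hi).2.ge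

theorem eval_seq {σ : Type*} (x : σ → ℕ → ℝ) (g : MvPolynomial σ ℝ) :
    MvPolynomial.eval₂ (coeRingHom : ℝ →+* Hyperreal) (fun k => ofSeq (x k)) g =
      ofSeq (fun i => MvPolynomial.eval (fun k => x k i) g) := by
  induction g using MvPolynomial.induction_on with
  | C r => simp only [MvPolynomial.eval₂_C, MvPolynomial.eval_C]; rfl
  | add p q hp hq => simp only [MvPolynomial.eval₂_add, hp, hq, map_add]; rfl
  | mul_X p k hp =>
    simp only [MvPolynomial.eval₂_mul, MvPolynomial.eval₂_X, hp, map_mul, MvPolynomial.eval_X]; rfl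

open Metric Topology

/-- Core: no sequence can violate every Łojasiewicz estimate. -/
theorem core (n m p : ℕ) (R : ℝ)
    (g : Fin m → MvPolynomial (Fin n) ℝ) (h : Fin p → MvPolynomial (Fin n) ℝ)
    (X : Set (EuclideanSpace ℝ (Fin n)))
    (hXdef : X = {x | (∀ j, 0 ≤ MvPolynomial.eval (fun i => x i) (g j)) ∧
        ∀ i, MvPolynomial.eval (fun i => x i) (h i) = 0})
    (x : ℕ → EuclideanSpace ℝ (Fin n)) (f : ℕ → ℝ)
    (hx : ∀ i, x i ∈ closedBall 0 R)
    (hg : ∀ i j, - f i ≤ MvPolynomial.eval (fun k => x i k) (g j))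
    (hh : ∀ i j, |MvPolynomial.eval (fun k => x i k) (h j)| ≤ f i)
    (hf0 : ∀ i, 0 ≤ f i)
    (hd0 : ∀ i, 0 < infDist (x i) X)
    (hft : Tendsto f atTop (𝓝 0))
    (hfd : ∀ᶠ i in atTop, infDist (x i) X ≤ 1 → f i ≤ infDist (x i) X ^ i) : False := by
  have hle : (hyperfilter ℕ : Filter ℕ) ≤ atTop := Nat.hyperfilter_le_atTop
  have hcont : ∀ q : MvPolynomial (Fin n) ℝ,
      Continuous (fun y : EuclideanSpace ℝ (Fin n) => MvPolynomial.eval (fun k => y k) q) := by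
    intro q
    have := MvPolynomial.continuous_eval q
    exact this.comp (by fun_prop)
  -- limit point
  obtain ⟨x0, -, hx0⟩ := (isCompact_closedBall (0 : EuclideanSpace ℝ (Fin n)) R).ultrafilter_le_nhds
    ((hyperfilter ℕ).map x) (by
      rw [le_principal_iff]
      exact Filter.mem_map.mpr (Filter.univ_mem' hx))
  have hx0' : Tendsto x (hyperfilter ℕ : Filter ℕ) (𝓝 x0) := hx0
  have hftU : Tendsto f (hyperfilter ℕ : Filter ℕ) (𝓝 0) := hft.mono_left hle
  have hx0X : x0 ∈ X := by
    rw [hXdef]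
    constructor
    · intro j
      have h1 := ((hcont (g j)).tendsto x0).comp hx0'
      have h2 := hftU.neg
      rw [neg_zero] at h2
      exact le_of_tendsto_of_tendsto' h2 h1 (fun i => hg i j)
    · intro j
      have h1 := (((hcont (h j)).tendsto x0).comp hx0').abs
      have := le_of_tendsto_of_tendsto' h1 hftU (fun i => hh i j)
      exact abs_nonpos_iff.mp this
  have hdt : Tendsto (fun i => infDist (x i) X) (hyperfilter ℕ : Filter ℕ) (𝓝 0) := by
    have h1 : Tendsto (fun i => dist (x i) x0) (hyperfilter ℕ : Filter ℕ) (𝓝 0) :=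
      tendsto_iff_dist_tendsto_zero.mp hx0'
    exact squeeze_zero (fun i => infDist_nonneg) (fun i => infDist_le_dist_of_mem hx0X) h1
  have hev : ∀ e > 0, ∀ᶠ i in (hyperfilter ℕ : Filter ℕ), infDist (x i) X < e :=
    fun e he => hdt.eventually_lt_const he
  set D : ℕ → ℝ := fun i => infDist (x i) X with hD
  set d : Hyperreal := ofSeq D with hd
  have h0 : 0 < d := (ofSeq_lt_ofSeq (f := fun _ => 0)).mpr (Eventually.of_forall hd0)
  have h2 : 2 * d ≤ 1 := by
    refine (ofSeq_le_ofSeq (f := fun i => 2 * D i) (g := fun _ => 1)).mpr ?_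
    filter_upwards [hev (1/2) (by norm_num)] with i hi
    linarith
  let c : ℝ →+* Hyperreal := (coeRingHom : ℝ →+* Hyperreal)
  have hreal : ∀ r : ℝ, c r ∈ modR d h0 h2 := by
    intro r
    refine ⟨1, ?_⟩
    rw [pow_one]
    refine (ofSeq_le_ofSeq (f := fun i => |r| * D i) (g := fun _ => 1)).mpr ?_
    filter_upwards [hev (1/(|r|+1)) (by positivity)] with i hi
    rw [lt_div_iff₀ (by positivity)] at hi
    have := hd0 i
    nlinarith
  obtain ⟨F, hF0, hFK, hlift⟩ := exists_lift (d := d) (h0 := h0) (h2 := h2) hyper_ivt c.fieldRange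
    (by rintro _ ⟨r, rfl⟩; exact hreal r)
  let a : Fin n → Hyperreal := fun k => ofSeq (fun i => x i k)
  have ha : ∀ k, a k ∈ modR d h0 h2 := by
    intro k
    obtain ⟨N, hN⟩ := hreal R
    refine ⟨N, le_trans ?_ hN⟩
    refine mul_le_mul_of_nonneg_right ?_ (pow_nonneg h0.le N)
    refine le_trans ?_ (le_abs_self _)
    refine (ofSeq_le_ofSeq (f := fun i => |x i k|) (g := fun _ => R)).mpr ?_
    refine Eventually.of_forall fun i => ?_
    have h1 := PiLp.norm_apply_le (x i) k
    have h2 := hx i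
    rw [mem_closedBall_zero_iff] at h2
    exact h1.trans h2
  choose b hbF hbs using fun k => hlift (a k) (ha k)
  have hbK : ∀ k, b k ∈ modR d h0 h2 := fun k => hFK _ (hbF k)
  have hdiff := fun q => diff_small c hreal a b ha hbK hbs q
  have hmemF : ∀ q : MvPolynomial (Fin n) ℝ, MvPolynomial.eval₂ c b q ∈ F := by
    intro q
    induction q using MvPolynomial.induction_on with
    | C r => rw [MvPolynomial.eval₂_C]; exact hF0 ⟨r, rfl⟩
    | add p q hp hq => rw [MvPolynomial.eval₂_add]; exact F.add_mem hp hq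
    | mul_X p k hp =>
      rw [MvPolynomial.eval₂_mul, MvPolynomial.eval₂_X]; exact F.mul_mem hp (hbF k)
  have hzero : ∀ y ∈ F, Small d y → y = 0 := by
    intro y hy hys
    by_contra hne
    exact not_small_of_inv_mem (h0 := h0) (h2 := h2) hne (hFK _ (F.inv_mem hy)) hys
  have hfs : Small d (ofSeq f) := by
    intro N
    refine (ofSeq_le_ofSeq (f := fun i => |f i|) (g := fun i => D i ^ N)).mpr ?_
    filter_upwards [hev 1 one_pos, hle hfd, hle (eventually_ge_atTop N)] with i h1 h2 h3
    rw [abs_of_nonneg (hf0 i)]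
    exact (h2 h1.le).trans (pow_le_pow_of_le_one (hd0 i).le h1.le h3)
  have hf0' : 0 ≤ ofSeq f := (ofSeq_le_ofSeq (f := fun _ => 0)).mpr (Eventually.of_forall hf0)
  choose β hβ using fun k => ofSeq_surjective (b k)
  have hbe : ∀ q : MvPolynomial (Fin n) ℝ, MvPolynomial.eval₂ c b q =
      ofSeq (fun i => MvPolynomial.eval (fun k => β k i) q) := by
    intro q
    rw [← eval_seq]
    congr 1
    funext k
    exact (hβ k).symm
  have hae : ∀ q : MvPolynomial (Fin n) ℝ, MvPolynomial.eval₂ c a q =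
      ofSeq (fun i => MvPolynomial.eval (fun k => x i k) q) := fun q =>
    eval_seq (fun k i => x i k) q
  have hgb : ∀ j, ∀ᶠ i in (hyperfilter ℕ : Filter ℕ), 0 ≤ MvPolynomial.eval (fun k => β k i) (g j) := by
    intro j
    refine (ofSeq_le_ofSeq (f := fun _ => 0)).mp ?_
    rw [← hbe]
    change 0 ≤ MvPolynomial.eval₂ c b (g j)
    by_contra hneg
    push Not at hneg
    refine hneg.ne (hzero _ (hmemF _) ?_)
    have h1 : -ofSeq f ≤ MvPolynomial.eval₂ c a (g j) := by
      rw [hae]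
      exact (ofSeq_le_ofSeq (f := fun i => - f i)).mpr (Eventually.of_forall fun i => hg i j)
    refine (Small.add h0 h2 hfs (hdiff (g j)).2.neg).of_le ?_
    rw [abs_of_neg hneg]
    refine le_trans ?_ (le_abs_self _)
    linarith
  have hhb : ∀ j, ∀ᶠ i in (hyperfilter ℕ : Filter ℕ), MvPolynomial.eval (fun k => β k i) (h j) = 0 := by
    intro j
    have h1 : |MvPolynomial.eval₂ c a (h j)| ≤ |ofSeq f| := by
      rw [hae, abs_of_nonneg hf0']
      exact (ofSeq_le_ofSeq
        (f := fun i => |MvPolynomial.eval (fun k => x i k) (h j)|)).mpr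
          (Eventually.of_forall fun i => hh i j)
    have h3 : MvPolynomial.eval₂ c b (h j) = 0 := by
      refine hzero _ (hmemF _) ?_
      have := Small.add h0 h2 (hfs.of_le h1) (hdiff (h j)).2
      simpa using this
    rw [hbe] at h3
    have h4 := (ofSeq_le_ofSeq (g := fun _ => 0)).mp h3.le
    have h5 := (ofSeq_le_ofSeq (f := fun _ => 0)).mp h3.ge
    filter_upwards [h4, h5] with i h6 h7 using le_antisymm h6 h7
  have hdist : ∀ k, ∀ᶠ i in (hyperfilter ℕ : Filter ℕ), |β k i - x i k| ≤ D i ^ 2 := by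
    intro k
    have h1 := hbs k 2
    rw [← hβ k] at h1
    exact (ofSeq_le_ofSeq (f := fun i => |β k i - x i k|) (g := fun i => D i ^ 2)).mp h1
  obtain ⟨i, hi1, hi2, hi3, hi4, hi5⟩ := ((eventually_all.mpr hgb).and ((eventually_all.mpr hhb).and
    ((eventually_all.mpr hdist).and ((hev 1 one_pos).and (hev (1/((n:ℝ)+1)) (by positivity)))))).exists
  have hmem : (WithLp.toLp 2 (fun k => β k i) : EuclideanSpace ℝ (Fin n)) ∈ X := by
    rw [hXdef]; exact ⟨hi1, hi2⟩
  have hfin := infDist_le_dist_of_mem (x := x i) hmem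
  rw [EuclideanSpace.dist_eq] at hfin
  have hDi : 0 < D i := hd0 i
  have hsum : ∑ k, dist (x i k) (β k i) ^ 2 ≤ ∑ k : Fin n, (D i ^ 2) ^ 2 := by
    refine Finset.sum_le_sum fun k _ => ?_
    rw [dist_comm, Real.dist_eq]
    gcongr
    exact hi3 k
  rw [Finset.sum_const, Finset.card_univ, Fintype.card_fin, nsmul_eq_mul] at hsum
  have hlt : (n : ℝ) * (D i ^ 2) ^ 2 < D i ^ 2 := by
    rw [lt_div_iff₀ (by positivity)] at hi5
    have h6 : (n : ℝ) * D i < 1 := by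
      change D i * _ < 1 at hi5
      nlinarith
    have h8 : (n : ℝ) * D i ^ 2 < 1 := by
      change D i < 1 at hi4
      nlinarith [mul_nonneg (Nat.cast_nonneg (α := ℝ) n) hDi.le]
    have h7 : 0 < D i ^ 2 := by positivity
    nlinarith
  have : √(∑ k, dist (x i k) (β k i) ^ 2) < D i := by
    rw [Real.sqrt_lt' hDi]
    exact hsum.trans_lt hlt
  exact absurd hfin (not_le.mpr this)

end Loj

end

open Metric

/-- Łojasiewicz inequality for a compact basic semi-algebraic set
X = {x : g_j(x) ≥ 0 ∀j, h_i(x) = 0 ∀i} ⊆ B_R: there are c > 0 and Ł > 0 with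
dist(x, X) ≤ c · f(x)^Ł on B_R, where f measures the constraint violation. -/
theorem stmt_9 (n m p : ℕ) (R : ℝ) (hR : 0 < R)
    (g : Fin m → MvPolynomial (Fin n) ℝ) (h : Fin p → MvPolynomial (Fin n) ℝ)
    (X : Set (EuclideanSpace ℝ (Fin n)))
    (hXdef : X = {x | (∀ j, 0 ≤ MvPolynomial.eval (fun i => x i) (g j)) ∧
        ∀ i, MvPolynomial.eval (fun i => x i) (h i) = 0})
    (hXc : IsCompact X) (hXne : X.Nonempty)
    (hXR : X ⊆ closedBall 0 R)
    (f : EuclideanSpace ℝ (Fin n) → ℝ)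
    (hf : ∀ x, f x =
      (insert (0 : ℝ)
          (((Finset.univ : Finset (Fin m)).image
              (fun j => max 0 (-MvPolynomial.eval (fun i => x i) (g j)))) ∪
            ((Finset.univ : Finset (Fin p)).image
              (fun i' => |MvPolynomial.eval (fun i => x i) (h i')|)))).max'
        (Finset.insert_nonempty _ _)) :
    ∃ c > (0 : ℝ), ∃ L > (0 : ℝ),
      ∀ x ∈ closedBall (0 : EuclideanSpace ℝ (Fin n)) R,
        infDist x X ≤ c * f x ^ L := by
  have hf0 : ∀ x, 0 ≤ f x := by
    intro x; rw [hf]; exact Finset.le_max' _ _ (Finset.mem_insert_self _ _)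
  have hfg : ∀ x j, - f x ≤ MvPolynomial.eval (fun k => x k) (g j) := by
    intro x j
    have h1 : max 0 (-MvPolynomial.eval (fun i => x i) (g j)) ≤ f x := by
      rw [hf]; apply Finset.le_max'; simp
    have := (le_max_right _ _).trans h1
    linarith
  have hfh : ∀ x j, |MvPolynomial.eval (fun k => x k) (h j)| ≤ f x := by
    intro x j
    rw [hf]; apply Finset.le_max'; simp
  by_contra hcon
  push Not at hcon
  have hseq : ∀ i : ℕ, ∃ x ∈ closedBall (0 : EuclideanSpace ℝ (Fin n)) R,
      ((i : ℝ) + 1) * f x ^ (1 / ((i : ℝ) + 1)) < infDist x X := fun i =>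
    hcon ((i : ℝ) + 1) (by positivity) (1 / ((i : ℝ) + 1)) (by positivity)
  choose x hx hlt using hseq
  have hpos : ∀ i, 0 < infDist (x i) X := fun i =>
    lt_of_le_of_lt (mul_nonneg (by positivity) (Real.rpow_nonneg (hf0 _) _)) (hlt i)
  have hpow : ∀ i : ℕ, f (x i) = (f (x i) ^ (1 / ((i : ℝ) + 1))) ^ (i + 1) := by
    intro i
    rw [← Real.rpow_natCast, ← Real.rpow_mul (hf0 _)]
    push_cast
    rw [one_div, inv_mul_cancel₀ (by positivity), Real.rpow_one]
  have hroot : ∀ i : ℕ, f (x i) ^ (1 / ((i : ℝ) + 1)) ≤ infDist (x i) X / ((i : ℝ) + 1) := by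
    intro i
    rw [le_div_iff₀ (by positivity)]
    linarith [hlt i]
  have hfle : ∀ i : ℕ, f (x i) ≤ (infDist (x i) X / ((i : ℝ) + 1)) ^ (i + 1) := by
    intro i
    rw [hpow i]
    exact pow_le_pow_left₀ (Real.rpow_nonneg (hf0 _) _) (hroot i) _
  have hbd : ∀ i, infDist (x i) X ≤ 2 * R := by
    intro i
    obtain ⟨y, hy⟩ := hXne
    have h1 := infDist_le_dist_of_mem (x := x i) hy
    have h2 := dist_triangle_right (x i) y 0
    have h3 := mem_closedBall.mp (hx i)
    have h4 := mem_closedBall.mp (hXR hy)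
    linarith
  refine Loj.core n m p R g h X hXdef x (fun i => f (x i)) hx (fun i j => hfg _ _)
    (fun i j => hfh _ _) (fun i => hf0 _) hpos ?_ ?_
  · have hlim : Filter.Tendsto (fun i : ℕ => (2 * R) / ((i : ℝ) + 1)) Filter.atTop (nhds 0) := by
      have := (tendsto_one_div_add_atTop_nhds_zero_nat (𝕜 := ℝ)).const_mul (2 * R)
      simpa [div_eq_mul_inv] using this
    refine tendsto_of_tendsto_of_tendsto_of_le_of_le' tendsto_const_nhds hlim
      (Filter.Eventually.of_forall fun i => hf0 _) ?_
    filter_upwards [hlim.eventually_lt_const one_pos] with i hi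
    have h1 : infDist (x i) X / ((i : ℝ) + 1) ≤ (2 * R) / ((i : ℝ) + 1) := by
      gcongr; exact hbd i
    have h2 : 0 ≤ infDist (x i) X / ((i : ℝ) + 1) := div_nonneg infDist_nonneg (by positivity)
    refine (hfle i).trans (le_trans ?_ h1)
    exact pow_le_of_le_one h2 (h1.trans hi.le) (by omega)
  · refine Filter.Eventually.of_forall fun i h1 => (hfle i).trans ?_
    have h3 : infDist (x i) X / ((i : ℝ) + 1) ≤ infDist (x i) X :=
      div_le_self infDist_nonneg (by linarith [Nat.cast_nonneg (α := ℝ) i])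
    have h2 : 0 ≤ infDist (x i) X / ((i : ℝ) + 1) := div_nonneg infDist_nonneg (by positivity)
    calc _ ≤ infDist (x i) X ^ (i + 1) := pow_le_pow_left₀ h2 h3 _
      _ ≤ infDist (x i) X ^ i := pow_le_pow_of_le_one infDist_nonneg h1 (by omega)
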